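/- arXiv:1906.00034 — 7 statements merged into one kernel-verified Lean document; each statement's English description precedes it below -/
import Mathlib

section
/- Let B̃ be an n×n real symmetric positive definite matrix, let s, y ∈ ℝⁿ with yᵀs > 0 and s ≠ 0, and let φ ≥ 0. Then the determinant of the Broyden-class update satisfies det(Φ(B̃, s, y, φ)) ≥ det(B̃ − (B̃ s sᵀ B̃)/(sᵀ B̃ s) + (y yᵀ)/(yᵀ s)) = det(B̃) · (yᵀ s)/(sᵀ B̃ s). -/
/-!
Write `w = B⁻¹ y`, `β = sᵀ B s` and `γ = yᵀ w`. The update `Φ` differs from `B` by a matrix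
whose columns lie in the span of `B s` and `y = B w`, so the Weinstein–Aronszajn identity reduces
its determinant to a `2 × 2` one (`det_add_two_vecMulVec`). Since `vᵀ s = 0`, this evaluates to
`det Φ = det B * (yᵀ s / β + φ * (γ / yᵀ s - yᵀ s / β))` (`broydenPhi_det_eq`).
Taking `φ = 0` gives the equality, and the coefficient of `φ` is nonnegative by the
Cauchy–Schwarz inequality `(yᵀ s)² ≤ β γ` for the inner product defined by `B`
(`posDef_cauchy_schwarz`).
-/

open Matrix

/-- The Broyden-class update
`Φ(B̃, s, y, φ) = B̃ − (B̃ s sᵀ B̃)/(sᵀ B̃ s) + (y yᵀ)/(yᵀ s) + φ (sᵀ B̃ s) v vᵀ`,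
where `v = y/(yᵀ s) − B̃ s/(sᵀ B̃ s)`. -/
noncomputable def broydenPhi {n : ℕ} (B : Matrix (Fin n) (Fin n) ℝ)
    (s y : Fin n → ℝ) (φ : ℝ) : Matrix (Fin n) (Fin n) ℝ :=
  B - (s ⬝ᵥ (B *ᵥ s))⁻¹ • Matrix.vecMulVec (B *ᵥ s) (s ᵥ* B)
    + (y ⬝ᵥ s)⁻¹ • Matrix.vecMulVec y y
    + (φ * (s ⬝ᵥ (B *ᵥ s))) •
        Matrix.vecMulVec ((y ⬝ᵥ s)⁻¹ • y - (s ⬝ᵥ (B *ᵥ s))⁻¹ • (B *ᵥ s))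
          ((y ⬝ᵥ s)⁻¹ • y - (s ⬝ᵥ (B *ᵥ s))⁻¹ • (B *ᵥ s))

/-- A rank-two matrix determinant lemma. Factoring the update vectors through `B` avoids any
invertibility assumption. -/
lemma det_add_two_vecMulVec {n : ℕ} (B : Matrix (Fin n) (Fin n) ℝ) (a b p q : Fin n → ℝ) :
    (B + vecMulVec (B *ᵥ a) p + vecMulVec (B *ᵥ b) q).det
      = B.det * ((1 + p ⬝ᵥ a) * (1 + q ⬝ᵥ b) - (p ⬝ᵥ b) * (q ⬝ᵥ a)) := by
  have h : B + vecMulVec (B *ᵥ a) p + vecMulVec (B *ᵥ b) q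
      = B * (1 + (Matrix.of ![a, b])ᵀ * Matrix.of ![p, q]) := by
    have h2 : (Matrix.of ![a, b])ᵀ * Matrix.of ![p, q] = vecMulVec a p + vecMulVec b q := by
      ext i j
      simp [Matrix.mul_apply, Fin.sum_univ_two, vecMulVec_apply]
    rw [h2, Matrix.mul_add, Matrix.mul_add, Matrix.mul_one, mul_vecMulVec, mul_vecMulVec, add_assoc]
  rw [h, det_mul, det_one_add_mul_comm, det_fin_two]
  have e : ∀ i j, (Matrix.of ![p, q] * (Matrix.of ![a, b])ᵀ) i j = ![p, q] i ⬝ᵥ ![a, b] j :=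
    fun i j => rfl
  simp only [Matrix.add_apply, e]
  simp

lemma broydenPhi_det_eq {n : ℕ} (B : Matrix (Fin n) (Fin n) ℝ) (hB : B.PosDef)
    (s w : Fin n → ℝ) (hys : 0 < (B *ᵥ w) ⬝ᵥ s) (hs : s ≠ 0) (φ : ℝ) :
    (broydenPhi B s (B *ᵥ w) φ).det = B.det * (((B *ᵥ w) ⬝ᵥ s) / (s ⬝ᵥ (B *ᵥ s))
      + φ * (((B *ᵥ w) ⬝ᵥ w) / ((B *ᵥ w) ⬝ᵥ s) - ((B *ᵥ w) ⬝ᵥ s) / (s ⬝ᵥ (B *ᵥ s)))) := by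
  have hβ : 0 < s ⬝ᵥ (B *ᵥ s) := by simpa using hB.dotProduct_mulVec_pos hs
  have hT : Bᵀ = B := by simpa using hB.isHermitian.eq
  have hsB : s ᵥ* B = B *ᵥ s := by rw [← mulVec_transpose, hT]
  have hsw : (B *ᵥ s) ⬝ᵥ w = (B *ᵥ w) ⬝ᵥ s := by
    rw [dotProduct_comm (B *ᵥ w), dotProduct_mulVec, hsB]
  have hss : (B *ᵥ s) ⬝ᵥ s = s ⬝ᵥ (B *ᵥ s) := dotProduct_comm _ _
  set β := s ⬝ᵥ (B *ᵥ s) with hβd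
  set δ := (B *ᵥ w) ⬝ᵥ s with hδ
  -- Expanding the left factor of `v vᵀ` splits the correction into multiples of `B s` and `y`.
  have h : broydenPhi B s (B *ᵥ w) φ
      = B + vecMulVec (B *ᵥ s) (-(β⁻¹ • (B *ᵥ s)) - φ • (δ⁻¹ • (B *ᵥ w) - β⁻¹ • (B *ᵥ s)))
        + vecMulVec (B *ᵥ w)
          (δ⁻¹ • (B *ᵥ w) + (φ * β / δ) • (δ⁻¹ • (B *ᵥ w) - β⁻¹ • (B *ᵥ s))) := by
    unfold broydenPhi
    rw [hsB, ← hβd, ← hδ]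
    ext i j
    simp only [Matrix.add_apply, Matrix.sub_apply, Matrix.smul_apply, vecMulVec_apply,
      Pi.sub_apply, Pi.add_apply, Pi.neg_apply, Pi.smul_apply, smul_eq_mul]
    field_simp
    ring
  rw [h, det_add_two_vecMulVec]
  simp only [sub_dotProduct, add_dotProduct, neg_dotProduct, smul_dotProduct, smul_eq_mul, hsw,
    hss, ← hδ]
  field_simp
  ring

/-- The inequality comes from `0 ≤ zᵀ B z` with `z = (sᵀ B s) w - (wᵀ B s) s`. -/
lemma posDef_cauchy_schwarz {n : ℕ} (B : Matrix (Fin n) (Fin n) ℝ) (hB : B.PosDef)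
    (s w : Fin n → ℝ) (hs : s ≠ 0) :
    ((B *ᵥ w) ⬝ᵥ s) ^ 2 ≤ (s ⬝ᵥ (B *ᵥ s)) * ((B *ᵥ w) ⬝ᵥ w) := by
  have hβ : 0 < s ⬝ᵥ (B *ᵥ s) := by simpa using hB.dotProduct_mulVec_pos hs
  have hT : Bᵀ = B := by simpa using hB.isHermitian.eq
  have hws : w ⬝ᵥ (B *ᵥ s) = (B *ᵥ w) ⬝ᵥ s := by
    rw [dotProduct_mulVec, ← mulVec_transpose, hT]
  have hz := hB.posSemidef.dotProduct_mulVec_nonneg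
    ((s ⬝ᵥ (B *ᵥ s)) • w - ((B *ᵥ w) ⬝ᵥ s) • s)
  simp only [star_trivial, mulVec_sub, mulVec_smul, sub_dotProduct, dotProduct_sub,
    smul_dotProduct, dotProduct_smul, smul_eq_mul, hws] at hz
  rw [dotProduct_comm s (B *ᵥ w), dotProduct_comm w (B *ᵥ w)] at hz
  refine le_of_mul_le_mul_left ?_ hβ
  linarith

/-- the determinant of the Broyden-class update satisfies
`det Φ(B̃,s,y,φ) ≥ det(B̃ − (B̃ s sᵀ B̃)/(sᵀ B̃ s) + (y yᵀ)/(yᵀ s)) = det B̃ · (yᵀ s)/(sᵀ B̃ s)`. -/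
theorem broydenPhi_det_ge {n : ℕ} (B : Matrix (Fin n) (Fin n) ℝ) (hB : B.PosDef)
    (s y : Fin n → ℝ) (hys : 0 < y ⬝ᵥ s) (hs : s ≠ 0) (φ : ℝ) (hφ : 0 ≤ φ) :
    (B - (s ⬝ᵥ (B *ᵥ s))⁻¹ • Matrix.vecMulVec (B *ᵥ s) (s ᵥ* B)
        + (y ⬝ᵥ s)⁻¹ • Matrix.vecMulVec y y).det
      = B.det * ((y ⬝ᵥ s) / (s ⬝ᵥ (B *ᵥ s))) ∧
    (B - (s ⬝ᵥ (B *ᵥ s))⁻¹ • Matrix.vecMulVec (B *ᵥ s) (s ᵥ* B)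
        + (y ⬝ᵥ s)⁻¹ • Matrix.vecMulVec y y).det ≤ (broydenPhi B s y φ).det := by
  obtain ⟨w, rfl⟩ : ∃ w, y = B *ᵥ w := by
    refine ⟨B⁻¹ *ᵥ y, ?_⟩
    rw [mulVec_mulVec, mul_nonsing_inv _ hB.det_pos.ne'.isUnit, one_mulVec]
  have hβ : 0 < s ⬝ᵥ (B *ᵥ s) := by simpa using hB.dotProduct_mulVec_pos hs
  have h0 := broydenPhi_det_eq B hB s w hys hs 0
  simp only [broydenPhi, zero_mul, zero_smul, add_zero] at h0
  refine ⟨h0, ?_⟩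
  rw [h0, broydenPhi_det_eq B hB s w hys hs φ]
  refine mul_le_mul_of_nonneg_left ?_ hB.det_pos.le
  refine le_add_of_nonneg_right (mul_nonneg hφ (sub_nonneg.2 ?_))
  rw [div_le_div_iff₀ hβ hys]
  linarith [posDef_cauchy_schwarz B hB s w hs]
end

section
/- Let f : ℝⁿ → ℝ be twice continuously differentiable and convex on a convex set D containing the segment from x to x + s (s ≠ 0), and assume ‖∇²f(z)‖ ≤ M for all z on this segment, where ∇²f(z) is positive definite for z on the segment. Set y = ∇f(x + s) − ∇f(x). Then the Powell ratio satisfies ‖y‖² / (sᵀ y) ≤ M. -/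
/-!
Write `H(t)` for the Hessian of `f` at `x + t s` and `y` for the gradient difference. Positivity of
`H(t)` on `M s - y`, symmetry, and `H(t) ≤ M` give `2 H(t)(s, y) - M H(t)(s, s) ≤ ‖y‖²`. The left
side is the derivative of `t ↦ ⟪∇f(x + t s), 2 y - M s⟫`, so the mean value theorem on `[0, 1]`
yields `2 ‖y‖² - M ⟪s, y⟫ ≤ ‖y‖²`, i.e. `‖y‖² ≤ M ⟪s, y⟫`.
-/

open scoped RealInnerProductSpace

/-- bound on the Powell ratio `‖y‖²/(sᵀ y) ≤ M` for
`y = ∇f(x+s) − ∇f(x)`, when `f` is `C²` and convex on a convex (open) set `D`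
containing the segment from `x` to `x+s`, with Hessian bounded in norm by `M`
and positive definite along the segment. -/
theorem powell_ratio_bound {n : ℕ} (f : EuclideanSpace ℝ (Fin n) → ℝ)
    (D : Set (EuclideanSpace ℝ (Fin n))) (x s : EuclideanSpace ℝ (Fin n))
    (M : ℝ) (hs : s ≠ 0) (hDo : IsOpen D) (hDc : Convex ℝ D)
    (hseg : segment ℝ x (x + s) ⊆ D)
    (hf : ContDiffOn ℝ 2 f D) (hconv : ConvexOn ℝ D f)
    (hM : ∀ z ∈ segment ℝ x (x + s), ‖fderiv ℝ (fderiv ℝ f) z‖ ≤ M)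
    (hpd : ∀ z ∈ segment ℝ x (x + s), ∀ v : EuclideanSpace ℝ (Fin n), v ≠ 0 →
      0 < fderiv ℝ (fderiv ℝ f) z v v) :
    ‖gradient f (x + s) - gradient f x‖ ^ 2 /
        ⟪s, gradient f (x + s) - gradient f x⟫ ≤ M := by
  have hmem : ∀ t ∈ Set.Icc (0 : ℝ) 1, x + t • s ∈ segment ℝ x (x + s) := by
    intro t ht
    rw [segment_eq_image']
    exact ⟨t, ht, by simp⟩
  have hM0 : 0 < M := by
    have hx := left_mem_segment ℝ x (x + s)
    have h1 := hpd x hx s hs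
    have h2 := (le_abs_self _).trans ((fderiv ℝ (fderiv ℝ f) x).le_opNorm₂ s s)
    by_contra hle
    have h3 : ‖fderiv ℝ (fderiv ℝ f) x‖ * ‖s‖ * ‖s‖ ≤ 0 * ‖s‖ * ‖s‖ := by
      gcongr
      exact (hM x hx).trans (not_lt.mp hle)
    linarith
  set y := gradient f (x + s) - gradient f x with hy
  have hinner : ∀ v, ⟪y, v⟫ = fderiv ℝ f (x + s) v - fderiv ℝ f x v := by
    intro v
    simp [hy, gradient, inner_sub_left]
  -- The pointwise Hessian inequality obtained by expanding `H(M s - y, M s - y) ≥ 0`.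
  have hquad : ∀ z ∈ segment ℝ x (x + s),
      fderiv ℝ (fderiv ℝ f) z s ((2 : ℝ) • y - M • s) ≤ ‖y‖ ^ 2 := by
    intro z hz
    have hsymm : IsSymmSndFDerivAt ℝ f z :=
      (hf.contDiffAt (hDo.mem_nhds (hseg hz))).isSymmSndFDerivAt (by simp)
    have hpos : 0 ≤ fderiv ℝ (fderiv ℝ f) z (M • s - y) (M • s - y) := by
      by_cases hw : M • s - y = 0
      · simp [hw]
      · exact (hpd z hz _ hw).le
    have hyy : fderiv ℝ (fderiv ℝ f) z y y ≤ M * ‖y‖ * ‖y‖ := by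
      refine ((le_abs_self _).trans ((fderiv ℝ (fderiv ℝ f) z).le_opNorm₂ y y)).trans ?_
      gcongr
      exact hM z hz
    have hsy := hsymm.eq y s
    simp only [map_sub, map_smul, sub_apply, smul_apply, smul_eq_mul, hsy] at hpos ⊢
    refine le_of_mul_le_mul_left ?_ hM0
    nlinarith
  have hderiv : ∀ t ∈ Set.Icc (0 : ℝ) 1,
      HasDerivAt (fun t : ℝ => fderiv ℝ f (x + t • s) ((2 : ℝ) • y - M • s))
        (fderiv ℝ (fderiv ℝ f) (x + t • s) s ((2 : ℝ) • y - M • s)) t := by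
    intro t ht
    have hz := hseg (hmem t ht)
    have hd : HasFDerivAt (fderiv ℝ f) (fderiv ℝ (fderiv ℝ f) (x + t • s)) (x + t • s) :=
      (((hf.contDiffAt (hDo.mem_nhds hz)).fderiv_right (m := 1) (by norm_num)).differentiableAt
        (by norm_num)).hasFDerivAt
    have hl : HasDerivAt (fun t : ℝ => x + t • s) s t := by
      simpa using ((hasDerivAt_id t).smul_const s).const_add x
    have hc := hd.comp_hasDerivAt t hl
    simpa using hc.clm_apply (hasDerivAt_const t ((2 : ℝ) • y - M • s))
  obtain ⟨c, hc, hce⟩ := exists_hasDerivAt_eq_slope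
    (fun t : ℝ => fderiv ℝ f (x + t • s) ((2 : ℝ) • y - M • s)) _ (zero_lt_one' ℝ)
    (fun t ht => (hderiv t ht).continuousAt.continuousWithinAt)
    (fun t ht => hderiv t (Set.Ioo_subset_Icc_self ht))
  have hkey : ‖y‖ ^ 2 ≤ M * ⟪s, y⟫ := by
    have h1 := hquad _ (hmem c (Set.Ioo_subset_Icc_self hc))
    rw [hce] at h1
    simp only [one_smul, zero_smul, add_zero, sub_zero, div_one] at h1
    rw [← hinner, inner_sub_right, inner_smul_right, inner_smul_right,
      real_inner_self_eq_norm_sq, real_inner_comm] at h1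
    linarith
  -- A nonpositive denominator makes the quotient nonpositive, so its sign need not be established.
  rcases le_or_gt ⟪s, y⟫ 0 with h | h
  · exact (div_nonpos_of_nonneg_of_nonpos (sq_nonneg _) h).trans hM0.le
  · exact (div_le_iff₀ h).mpr hkey
end

section
/- Let f : ℝⁿ → ℝ (n ≥ 2) be twice continuously differentiable with convex level set D = {x : f(x) ≤ f(x₀)}, convex and bounded below on D, and with ‖∇²f(x)‖ ≤ M on D. Let φ ∈ [0,1), let 0 < α < 1/2 and α < β < 1, and consider sequences generated by the Secant Broyden-Class-type scheme: B₀ symmetric positive definite; d_k = −B_k^{-1} g_k where g_k = ∇f(x_k) and g_k ≠ 0 for all k; x_{k+1} = x_k + λ_k d_k with λ_k > 0 satisfying the Wolfe conditions f(x_k + λ_k d_k) ≤ f(x_k) + α λ_k g_kᵀ d_k and ∇f(x_k + λ_k d_k)ᵀ d_k ≥ β g_kᵀ d_k; s_k = x_{k+1} − x_k, y_k = g_{k+1} − g_k; B_{k+1} = Φ(B̃_k, s_k, y_k, φ) where each B̃_k is symmetric positive definite and satisfies tr(B̃_k) ≤ tr(B_k), det(B̃_k) ≥ det(B_k), and ‖B_k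 s_k‖²/(s_kᵀ B_k s_k)² ≤ ‖B̃_k s_k‖²/(s_kᵀ B̃_k s_k)². Then liminf_{k→∞} ‖g_k‖ = 0. -/
/-!
The potential `ψ(B) = tr B - log det B` is nonnegative on positive definite matrices
(`log_det_le_trace`). If `‖g_k‖` stayed above some `γ > 0`, then `ψ(B_k)` would eventually drop by
at least `1` at every step, which is absurd; hence `‖g_k‖ ≤ γ` infinitely often for every `γ > 0`.

Write `a = sᵀB̃s`, `b = ‖B̃s‖²`, `r = yᵀs`, `δ = -gᵀs`.

* The first Wolfe condition and boundedness below give `δ_k → 0`; the second gives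
  `r ≥ (1 - β) δ`. Convexity and the Hessian bound give `‖y‖² ≤ M r` (`gradient_cocoercive`).
* Since `B s = -λ g`, the ratio hypothesis says `b / a² ≥ ‖g‖² / δ²`, so that `a / r ≤ ε b / a` with
  `ε` as small as desired once `δ` is small.
* The trace changes by `‖y‖²/r + φ (‖y‖²/r)(a/r) - (1 - φ) b/a - 2φ yᵀB̃s/r`
  (`trace_broydenPhi`). For `ε` small, the second and fourth terms are absorbed by half of the
  third, leaving at most `M - (1 - φ)/2 · b/a`.
* The determinant is multiplied by at least `r / a` (`le_det_broydenPhi`), because the BFGS part of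
  the update is a congruence `EᵀB̃E` with `(det E)² = r / a` and the remaining part is positive
  semidefinite of rank one.
* As `-log (r / a) ≤ log ε + log (b / a)`, and `log (b / a)` is absorbed by the remaining multiple
  of `b / a`, the change of `ψ` is at most a constant plus `log ε` (`potential_step`), hence at
  most `-1` for small `ε`.
-/

open Matrix
open scoped RealInnerProductSpace

/-! ### Determinant, trace and definiteness of the update -/

lemma det_one_add_vecMulVec {n : ℕ} (u v : Fin n → ℝ) :
    (1 + vecMulVec u v).det = 1 + v ⬝ᵥ u := by
  rw [vecMulVec_eq Unit, det_one_add_replicateCol_mul_replicateRow]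

lemma det_le_det_add_vecMulVec {n : ℕ} {C : Matrix (Fin n) (Fin n) ℝ} (hC : C.PosDef)
    {c : ℝ} (hc : 0 ≤ c) (v : Fin n → ℝ) :
    C.det ≤ (C + c • vecMulVec v v).det := by
  have hu : IsUnit C.det := hC.det_pos.ne'.isUnit
  have hfac : C + c • vecMulVec v v = C * (1 + vecMulVec (C⁻¹ *ᵥ (c • v)) v) := by
    rw [mul_add, mul_one, mul_vecMulVec, mulVec_mulVec, mul_nonsing_inv _ hu, one_mulVec,
      smul_vecMulVec]
  rw [hfac, det_mul, det_one_add_vecMulVec]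
  have hnn : 0 ≤ v ⬝ᵥ (C⁻¹ *ᵥ v) := by
    simpa using hC.inv.posSemidef.dotProduct_mulVec_nonneg v
  have : 0 ≤ v ⬝ᵥ (C⁻¹ *ᵥ (c • v)) := by
    rw [mulVec_smul, dotProduct_smul]; exact mul_nonneg hc hnn
  nlinarith [hC.det_pos]

/-- The BFGS part (`φ = 0`) of the update is a congruence `Eᵀ B E` with `E = 1 + s pᵀ`. -/
lemma bfgs_posDef_det {n : ℕ} {B : Matrix (Fin n) (Fin n) ℝ} (hB : B.PosDef)
    {s y : Fin n → ℝ} (hs : 0 < s ⬝ᵥ (B *ᵥ s)) (hy : 0 < y ⬝ᵥ s) :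
    (B - (s ⬝ᵥ (B *ᵥ s))⁻¹ • vecMulVec (B *ᵥ s) (s ᵥ* B)
      + (y ⬝ᵥ s)⁻¹ • vecMulVec y y).PosDef ∧
    (B - (s ⬝ᵥ (B *ᵥ s))⁻¹ • vecMulVec (B *ᵥ s) (s ᵥ* B)
      + (y ⬝ᵥ s)⁻¹ • vecMulVec y y).det = B.det * ((y ⬝ᵥ s) / (s ⬝ᵥ (B *ᵥ s))) := by
  have hBt : Bᵀ = B := by simpa using hB.isHermitian.eq
  have hsB : s ᵥ* B = B *ᵥ s := by rw [← mulVec_transpose, hBt]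
  rw [hsB]
  set a := s ⬝ᵥ (B *ᵥ s) with ha
  set r := y ⬝ᵥ s with hr
  set z := B *ᵥ s with hz
  -- `q² = 1 / (r a)`, so that `a q² y yᵀ` is the secant term
  obtain ⟨q, hq0, hq⟩ : ∃ q : ℝ, 0 < q ∧ q ^ 2 * (r * a) = 1 := by
    refine ⟨(√(r * a))⁻¹, by positivity, ?_⟩
    rw [inv_pow, Real.sq_sqrt (by positivity)]
    field_simp
  set p : Fin n → ℝ := q • y - a⁻¹ • z with hp
  set E : Matrix (Fin n) (Fin n) ℝ := 1 + vecMulVec s p with hE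
  have hzs : z ⬝ᵥ s = a := dotProduct_comm _ _
  have hdetE : E.det = q * r := by
    rw [hE, det_one_add_vecMulVec, hp, sub_dotProduct, smul_dotProduct, smul_dotProduct, hzs,
      ← hr, smul_eq_mul, smul_eq_mul, inv_mul_cancel₀ hs.ne']
    ring
  have hfac : Eᵀ * B * E = B - a⁻¹ • vecMulVec z z + r⁻¹ • vecMulVec y y := by
    have h1 : Eᵀ * B * E =
        B + vecMulVec z p + vecMulVec p z + a • vecMulVec p p := by
      rw [hE, transpose_add, transpose_one, transpose_vecMulVec, add_mul, one_mul, mul_add,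
        mul_one, vecMulVec_mul, hsB, add_mul, mul_vecMulVec, vecMulVec_mul_vecMulVec, hzs,
        vecMulVec_smul]
      abel
    rw [h1, hp]
    ext i j
    simp only [Matrix.add_apply, Matrix.sub_apply, Matrix.smul_apply, vecMulVec_apply, Pi.sub_apply, Pi.smul_apply,
      smul_eq_mul]
    have hr' : r⁻¹ = a * q ^ 2 := by
      field_simp; linarith
    rw [hr']
    field_simp
    ring
  rw [← hfac]
  constructor
  · have := hB.conjTranspose_mul_mul_same (B := E) (mulVec_injective_of_isUnit
      ((isUnit_iff_isUnit_det E).2 (by rw [hdetE]; exact (mul_pos hq0 hy).ne'.isUnit)))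
    simpa using this
  · rw [det_mul, det_mul, det_transpose, hdetE]
    have : q * r * (q * r) = r / a := by
      field_simp; nlinarith
    rw [mul_right_comm, this, mul_comm]

lemma broydenPhi_posDef {n : ℕ} {B : Matrix (Fin n) (Fin n) ℝ} (hB : B.PosDef)
    {s y : Fin n → ℝ} {φ : ℝ} (hφ : 0 ≤ φ) (hs : 0 < s ⬝ᵥ (B *ᵥ s)) (hy : 0 < y ⬝ᵥ s) :
    (broydenPhi B s y φ).PosDef := by
  refine (bfgs_posDef_det hB hs hy).1.add_posSemidef ?_
  have := posSemidef_vecMulVec_self_star ((y ⬝ᵥ s)⁻¹ • y - (s ⬝ᵥ (B *ᵥ s))⁻¹ • (B *ᵥ s))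
  rw [star_trivial] at this
  exact this.smul (mul_nonneg hφ hs.le)

lemma le_det_broydenPhi {n : ℕ} {B : Matrix (Fin n) (Fin n) ℝ} (hB : B.PosDef)
    {s y : Fin n → ℝ} {φ : ℝ} (hφ : 0 ≤ φ) (hs : 0 < s ⬝ᵥ (B *ᵥ s)) (hy : 0 < y ⬝ᵥ s) :
    B.det * ((y ⬝ᵥ s) / (s ⬝ᵥ (B *ᵥ s))) ≤ (broydenPhi B s y φ).det := by
  rw [← (bfgs_posDef_det hB hs hy).2]
  exact det_le_det_add_vecMulVec (bfgs_posDef_det hB hs hy).1 (mul_nonneg hφ hs.le) _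

lemma trace_broydenPhi {n : ℕ} {B : Matrix (Fin n) (Fin n) ℝ} (hB : B.PosDef)
    {s y : Fin n → ℝ} {φ : ℝ} (hs : 0 < s ⬝ᵥ (B *ᵥ s)) (hy : 0 < y ⬝ᵥ s) :
    (broydenPhi B s y φ).trace = B.trace
      + ((y ⬝ᵥ y) / (y ⬝ᵥ s)
        + φ * ((y ⬝ᵥ y) / (y ⬝ᵥ s)) * ((s ⬝ᵥ (B *ᵥ s)) / (y ⬝ᵥ s))
        - (1 - φ) * (((B *ᵥ s) ⬝ᵥ (B *ᵥ s)) / (s ⬝ᵥ (B *ᵥ s)))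
        - 2 * φ * ((y ⬝ᵥ (B *ᵥ s)) / (y ⬝ᵥ s))) := by
  have hBt : Bᵀ = B := by simpa using hB.isHermitian.eq
  have hsB : s ᵥ* B = B *ᵥ s := by rw [← mulVec_transpose, hBt]
  have hc : (B *ᵥ s) ⬝ᵥ y = y ⬝ᵥ (B *ᵥ s) := dotProduct_comm _ _
  simp only [broydenPhi, hsB, trace_add, trace_sub, trace_smul, trace_vecMulVec,
    sub_dotProduct, dotProduct_sub, smul_dotProduct, dotProduct_smul, smul_eq_mul, hc]
  field_simp
  ring

/-- `log det B ≤ tr B`, summing `log μ ≤ μ` over the eigenvalues. -/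
lemma log_det_le_trace {n : ℕ} {B : Matrix (Fin n) (Fin n) ℝ} (hB : B.PosDef) :
    Real.log B.det ≤ B.trace := by
  rw [hB.isHermitian.det_eq_prod_eigenvalues, hB.isHermitian.trace_eq_sum_eigenvalues]
  simp only [RCLike.ofReal_real_eq_id, id_eq]
  rw [Real.log_prod (fun i _ => (hB.eigenvalues_pos i).ne')]
  exact Finset.sum_le_sum fun i _ => Real.log_le_self (hB.eigenvalues_pos i).le

/-! ### Cocoercivity of the gradient -/

lemma hasDerivAt_fderiv_line {n : ℕ} {f : EuclideanSpace ℝ (Fin n) → ℝ} (hf : ContDiff ℝ 2 f)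
    (z v w : EuclideanSpace ℝ (Fin n)) (t : ℝ) :
    HasDerivAt (fun t : ℝ => fderiv ℝ f (z + t • v) w)
      (fderiv ℝ (fderiv ℝ f) (z + t • v) v w) t := by
  have h1 : HasDerivAt (fun t : ℝ => z + t • v) v t := by
    simpa using ((hasDerivAt_id t).smul_const v).const_add z
  have hd : Differentiable ℝ (fderiv ℝ f) :=
    (hf.fderiv_right (m := 1) (by norm_num)).differentiable (by norm_num)
  have h2 := (hd (z + t • v)).hasFDerivAt.comp_hasDerivAt t h1
  exact ((ContinuousLinearMap.apply ℝ ℝ w).hasFDerivAt.comp_hasDerivAt t h2)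

lemma hessian_nonneg {n : ℕ} {f : EuclideanSpace ℝ (Fin n) → ℝ} (hf : ContDiff ℝ 2 f) {c : ℝ}
    (hconv : ConvexOn ℝ {z | f z ≤ c} f) {z : EuclideanSpace ℝ (Fin n)} (hz : f z < c)
    (w : EuclideanSpace ℝ (Fin n)) : 0 ≤ fderiv ℝ (fderiv ℝ f) z w w := by
  set γ : ℝ →ᵃ[ℝ] EuclideanSpace ℝ (Fin n) := AffineMap.lineMap z (z + w) with hγ
  have hγt : ∀ t, γ t = z + t • w := by
    intro t; simp [hγ, AffineMap.lineMap_apply, add_comm]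
  have hline := hconv.comp_affineMap γ
  have hderiv : ∀ t : ℝ, HasDerivAt (f ∘ γ) (fderiv ℝ f (z + t • w) w) t := by
    intro t
    have h1 : HasDerivAt γ w t := by
      rw [show (γ : ℝ → _) = fun t => z + t • w from funext hγt]
      simpa using ((hasDerivAt_id t).smul_const w).const_add z
    have := ((hf.differentiable (by norm_num)) (γ t)).hasFDerivAt.comp_hasDerivAt t h1
    rwa [hγt] at this
  have hmono := hline.monotoneOn_deriv (fun t _ => (hderiv t).differentiableAt)
  rw [show deriv (f ∘ γ) = fun t => fderiv ℝ f (z + t • w) w from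
    funext fun t => (hderiv t).deriv] at hmono
  have hnn := hmono.derivWithin_nonneg (x := 0)
  have hnhds : γ ⁻¹' {z | f z ≤ c} ∈ nhds (0 : ℝ) := by
    have hcont : ContinuousAt (fun t : ℝ => f (γ t)) 0 := (hderiv 0).continuousAt
    have h0 : f (γ 0) < c := by simpa [hγt] using hz
    filter_upwards [hcont.eventually_lt_const h0] with t ht
    exact ht.le
  rw [derivWithin_of_mem_nhds hnhds, (hasDerivAt_fderiv_line hf z w w 0).deriv] at hnn
  simpa using hnn

/-- Cocoercivity of the gradient along a segment from `{f ≤ c}` to `{f < c}`. Positivity of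
`H(as - w, as - w)` for `a = M`, `w = y` bounds the derivative of
`t ↦ ⟪∇f(u + ts), w - (a/2) s⟫`, and the mean value inequality gives the claim. -/
lemma gradient_cocoercive {n : ℕ} {f : EuclideanSpace ℝ (Fin n) → ℝ} (hf : ContDiff ℝ 2 f)
    {c M : ℝ} (hM0 : 0 < M) (hconv : ConvexOn ℝ {z | f z ≤ c} f)
    (hM : ∀ z ∈ {z | f z ≤ c}, ‖fderiv ℝ (fderiv ℝ f) z‖ ≤ M)
    {u s : EuclideanSpace ℝ (Fin n)}
    (hu : f u ≤ c) (hus : f (u + s) < c) :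
    ‖gradient f (u + s) - gradient f u‖ ^ 2 ≤
      M * ⟪gradient f (u + s) - gradient f u, s⟫ := by
  set y := gradient f (u + s) - gradient f u with hy
  have hyw : ∀ w, ⟪y, w⟫ = fderiv ℝ f (u + s) w - fderiv ℝ f u w := by
    intro w
    rw [hy, inner_sub_left, inner_gradient_left, inner_gradient_left]
  set w : EuclideanSpace ℝ (Fin n) := y - (M / 2) • s with hw
  have hD := fun t => hasDerivAt_fderiv_line hf u s w t
  have hbound : ∀ t ∈ interior (Set.Icc (0 : ℝ) 1),
      deriv (fun t : ℝ => fderiv ℝ f (u + t • s) w) t ≤ ‖y‖ ^ 2 / 2 := by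
    intro t ht
    rw [interior_Icc] at ht
    rw [(hD t).deriv]
    have hlt : f (u + t • s) < c := by
      have h := hconv.2 hu hus.le (sub_nonneg.2 ht.2.le) ht.1.le (by ring)
      have e : (1 - t) • u + t • (u + s) = u + t • s := by module
      rw [e, smul_eq_mul, smul_eq_mul] at h
      nlinarith [ht.1, ht.2]
    set H := fderiv ℝ (fderiv ℝ f) (u + t • s) with hH
    have hsymm : H y s = H s y :=
      (hf.contDiffAt.isSymmSndFDerivAt (by simp)) y s
    have hpos : 0 ≤ H (M • s - y) (M • s - y) := hessian_nonneg hf hconv hlt _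
    have hyy : H y y ≤ M * ‖y‖ ^ 2 := by
      calc H y y ≤ ‖H y y‖ := le_abs_self _
        _ ≤ ‖H‖ * ‖y‖ * ‖y‖ := H.le_opNorm₂ y y
        _ ≤ M * ‖y‖ * ‖y‖ := by gcongr; exact hM _ hlt.le
        _ = _ := by ring
    simp only [map_sub, map_smul, _root_.sub_apply, _root_.smul_apply, smul_eq_mul] at hpos
    simp only [hw, map_sub, map_smul, smul_eq_mul]
    rw [hsymm] at hpos
    have : 0 ≤ M * (‖y‖ ^ 2 / 2 - (H s y - M / 2 * H s s)) := by nlinarith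
    have := nonneg_of_mul_nonneg_right this hM0
    linarith
  have hmv := (convex_Icc (0 : ℝ) 1).image_sub_le_mul_sub_of_deriv_le
    (fun t _ => (hD t).continuousAt.continuousWithinAt)
    (fun t _ => (hD t).differentiableAt.differentiableWithinAt) hbound
    0 (by simp) 1 (by simp) (by simp)
  simp only [one_smul, zero_smul, add_zero, sub_zero, mul_one] at hmv
  rw [← hyw, hw, inner_sub_right, inner_smul_right, real_inner_self_eq_norm_sq] at hmv
  linarith

/-! ### Decrease of the potential -/

/-- One step of the potential `tr B - log det B` decreases it by at least `1`, in scalar form: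
`a = sᵀB̃s`, `b = ‖B̃s‖²`, `Y = ‖y‖²`, `r = yᵀs`, `c = yᵀB̃s`, and the hypothesis `a / r ≤ ε b / a`
expresses that the step is nearly stationary. -/
lemma potential_step {a b Y r c M φ η ε : ℝ} (ha : 0 < a) (hr : 0 < r) (hM : 0 < M)
    (hφ0 : 0 ≤ φ) (hη : 0 < η) (hηφ : 8 * η = 1 - φ) (hε : 0 < ε)
    (hε1 : M * ε ≤ η ^ 2) (hε2 : ε ≤ 4 * η * Real.exp (-M))
    (hY : Y ≤ M * r) (hc : c ^ 2 ≤ Y * b) (har : a / r ≤ ε * (b / a)) :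
    Y / r + φ * (Y / r) * (a / r) - (1 - φ) * (b / a) - 2 * φ * (c / r)
      - Real.log (r / a) ≤ -1 := by
  set q := b / a with hq
  have har0 : 0 < a / r := by positivity
  have hq0 : 0 < q := by
    by_contra h
    nlinarith
  have hYr : Y / r ≤ M := (div_le_iff₀ hr).2 hY
  have h1 : φ * (Y / r) * (a / r) ≤ 2 * η * q := by
    have h2 : (Y / r) * (a / r) ≤ M * (ε * q) := by
      calc (Y / r) * (a / r) ≤ M * (a / r) := by gcongr
        _ ≤ M * (ε * q) := by gcongr
    have h3 : φ * ((Y / r) * (a / r)) ≤ φ * (M * (ε * q)) := by gcongr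
    have h4 : φ * (M * (ε * q)) ≤ 1 * (M * (ε * q)) := by
      gcongr; linarith
    have h5 : M * ε * q ≤ η ^ 2 * q := by gcongr
    have h6 : η ^ 2 * q ≤ 2 * η * q := by
      gcongr; nlinarith
    linarith
  have h2 : -(2 * φ * (c / r)) ≤ 2 * η * q := by
    have h3 : (c / r) ^ 2 ≤ (η * q) ^ 2 := by
      have e1 : (c / r) ^ 2 ≤ (Y / r) * (q * (a / r)) := by
        have : (Y / r) * (q * (a / r)) = Y * b / r ^ 2 := by
          rw [hq]; field_simp
        rw [this, div_pow]; gcongr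
      have e2 : (Y / r) * (q * (a / r)) ≤ M * (q * (ε * q)) := by
        calc (Y / r) * (q * (a / r)) ≤ M * (q * (a / r)) := by gcongr
          _ ≤ M * (q * (ε * q)) := by gcongr
      have e3 : M * ε * q ^ 2 ≤ η ^ 2 * q ^ 2 := by gcongr
      nlinarith
    have h4 : |c / r| ≤ η * q := abs_le_of_sq_le_sq h3 (by positivity)
    have h5 := neg_abs_le (c / r)
    have h6 : 0 ≤ η * q := by positivity
    nlinarith
  have hlog : -Real.log (r / a) ≤ -M + (4 * η * q - 1) := by
    rw [← Real.log_inv, inv_div]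
    calc Real.log (a / r) ≤ Real.log (Real.exp (-M) * (4 * η * q)) := by
          apply Real.log_le_log har0
          calc a / r ≤ ε * q := har
            _ ≤ 4 * η * Real.exp (-M) * q := by gcongr
            _ = _ := by ring
      _ = -M + Real.log (4 * η * q) := by
          rw [Real.log_mul (Real.exp_pos _).ne' (by positivity), Real.log_exp]
      _ ≤ _ := by
          gcongr
          exact Real.log_le_sub_one_of_pos (by positivity)
  rw [← hηφ]
  linarith

lemma inner_eq_dotProduct {n : ℕ} (u v : EuclideanSpace ℝ (Fin n)) :
    ⟪u, v⟫ = u.ofLp ⬝ᵥ v.ofLp := by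
  rw [EuclideanSpace.inner_eq_star_dotProduct, star_trivial, dotProduct_comm]

/-- For a quasi-Newton step `s = λd`, `d = -B⁻¹g`: since `Bs = -λg`, the curvature `sᵀBs` equals
`λ(-gᵀs)`, and in particular `s` is a descent step. -/
lemma quasiNewton_step {n : ℕ} {B : Matrix (Fin n) (Fin n) ℝ} (hB : B.PosDef)
    {g d s : EuclideanSpace ℝ (Fin n)} {lam : ℝ} (hlam : 0 < lam) (hg : g ≠ 0)
    (hd : d = -(Matrix.toEuclideanLin B⁻¹ g)) (hs : s = lam • d) :
    s.ofLp ≠ 0 ∧ 0 < -⟪g, s⟫ ∧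
    (B *ᵥ s.ofLp) ⬝ᵥ (B *ᵥ s.ofLp) / (s.ofLp ⬝ᵥ (B *ᵥ s.ofLp)) ^ 2 = ‖g‖ ^ 2 / (-⟪g, s⟫) ^ 2 := by
  have hu : IsUnit B.det := hB.det_pos.ne'.isUnit
  have hBs : B *ᵥ s.ofLp = -(lam • g.ofLp) := by
    have : s.ofLp = -(lam • (B⁻¹ *ᵥ g.ofLp)) := by
      rw [hs, hd]
      simp [Matrix.toEuclideanLin]
    rw [this, mulVec_neg, mulVec_smul, mulVec_mulVec, mul_nonsing_inv _ hu, one_mulVec]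
  have hg' : g.ofLp ≠ 0 := fun h => hg (by ext i; simp [h])
  have hs0 : s.ofLp ≠ 0 := by
    intro h
    rw [h, mulVec_zero, zero_eq_neg] at hBs
    exact (smul_ne_zero hlam.ne' hg') hBs
  have hsBs : s.ofLp ⬝ᵥ (B *ᵥ s.ofLp) = lam * (-⟪g, s⟫) := by
    rw [hBs, dotProduct_neg, dotProduct_smul, inner_eq_dotProduct, dotProduct_comm, smul_eq_mul]
    ring
  have hpos : 0 < s.ofLp ⬝ᵥ (B *ᵥ s.ofLp) := by
    simpa using hB.dotProduct_mulVec_pos hs0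
  have hδ : 0 < -⟪g, s⟫ := by
    rw [hsBs] at hpos
    exact pos_of_mul_pos_right hpos hlam.le
  refine ⟨hs0, hδ, ?_⟩
  rw [hsBs, hBs, neg_dotProduct_neg, smul_dotProduct, dotProduct_smul, ← inner_eq_dotProduct,
    real_inner_self_eq_norm_sq, smul_eq_mul, smul_eq_mul, mul_pow]
  field_simp

/-- The change of `tr B - log det B` over one update with `s = s_k`, `y = y_k` is at most `-1` as
soon as `δ = -gᵀs` is small compared with `‖g‖²`. -/
lemma potential_update {n : ℕ} {B Bt : Matrix (Fin n) (Fin n) ℝ} (hB : B.PosDef)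
    (hBt : Bt.PosDef) {s y : Fin n → ℝ} {φ M η ε δ γ β : ℝ} (hM : 0 < M)
    (hφ0 : 0 ≤ φ) (hη : 0 < η) (hηφ : 8 * η = 1 - φ) (hε : 0 < ε)
    (hε1 : M * ε ≤ η ^ 2) (hε2 : ε ≤ 4 * η * Real.exp (-M))
    (hs : s ≠ 0) (hβ : β < 1) (hδ : 0 < δ) (hγ : 0 < γ)
    (hy : (1 - β) * δ ≤ y ⬝ᵥ s) (hyy : y ⬝ᵥ y ≤ M * (y ⬝ᵥ s))
    (hratio : γ ^ 2 / δ ^ 2 ≤ ((Bt *ᵥ s) ⬝ᵥ (Bt *ᵥ s)) / (s ⬝ᵥ (Bt *ᵥ s)) ^ 2)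
    (hsmall : δ ≤ ε * ((1 - β) * γ ^ 2))
    (htr : Bt.trace ≤ B.trace) (hdet : B.det ≤ Bt.det) :
    (broydenPhi Bt s y φ).trace - Real.log (broydenPhi Bt s y φ).det ≤
      B.trace - Real.log B.det - 1 := by
  have ha : 0 < s ⬝ᵥ (Bt *ᵥ s) := by
    simpa using hBt.dotProduct_mulVec_pos hs
  have hβ' : 0 < 1 - β := by linarith
  have hr : 0 < y ⬝ᵥ s := lt_of_lt_of_le (by positivity) hy
  have hdet' := le_det_broydenPhi hBt hφ0 ha hr
  have hlog : Real.log B.det + Real.log ((y ⬝ᵥ s) / (s ⬝ᵥ (Bt *ᵥ s))) ≤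
      Real.log (broydenPhi Bt s y φ).det := by
    have hq : 0 < (y ⬝ᵥ s) / (s ⬝ᵥ (Bt *ᵥ s)) := by positivity
    rw [← Real.log_mul hB.det_pos.ne' hq.ne']
    apply Real.log_le_log (mul_pos hB.det_pos hq)
    exact le_trans (by gcongr) hdet'
  rw [trace_broydenPhi hBt ha hr]
  set a := s ⬝ᵥ (Bt *ᵥ s)
  set b := (Bt *ᵥ s) ⬝ᵥ (Bt *ᵥ s)
  set r := y ⬝ᵥ s
  have hc : (y ⬝ᵥ (Bt *ᵥ s)) ^ 2 ≤ (y ⬝ᵥ y) * b := by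
    simp only [b, dotProduct, ← sq]
    exact Finset.sum_mul_sq_le_sq_mul_sq _ _ _
  have har : a / r ≤ ε * (b / a) := by
    have h1 : γ ^ 2 * a ≤ δ ^ 2 * (b / a) := by
      have h := mul_le_mul_of_nonneg_right hratio (by positivity : 0 ≤ δ ^ 2 * a)
      have e1 : γ ^ 2 / δ ^ 2 * (δ ^ 2 * a) = γ ^ 2 * a := by field_simp
      have e2 : b / a ^ 2 * (δ ^ 2 * a) = δ ^ 2 * (b / a) := by field_simp
      rwa [e1, e2] at h
    have hq : 0 < b / a := by
      by_contra h
      have : 0 < γ ^ 2 * a := by positivity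
      nlinarith [sq_nonneg δ]
    calc a / r ≤ a / ((1 - β) * δ) := by gcongr
      _ = (γ ^ 2 * a) / (γ ^ 2 * ((1 - β) * δ)) := by field_simp
      _ ≤ (δ ^ 2 * (b / a)) / (γ ^ 2 * ((1 - β) * δ)) := by gcongr
      _ = (δ * (b / a)) / ((1 - β) * γ ^ 2) := by field_simp
      _ ≤ (ε * ((1 - β) * γ ^ 2) * (b / a)) / ((1 - β) * γ ^ 2) := by gcongr
      _ = ε * (b / a) := by field_simp
  have := potential_step (c := y ⬝ᵥ (Bt *ᵥ s)) ha hr hM hφ0 hη hηφ hε hε1 hε2 hyy hc har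
  linarith

/-- convergence (`liminf ‖g_k‖ = 0`) of the Secant Broyden-Class-type
scheme, under the trace, determinant and direction-ratio conditions on `B̃_k`. -/
theorem secant_broyden_liminf {n : ℕ} (hn : 2 ≤ n)
    (f : EuclideanSpace ℝ (Fin n) → ℝ)
    (x d : ℕ → EuclideanSpace ℝ (Fin n)) (lam : ℕ → ℝ)
    (B Btil : ℕ → Matrix (Fin n) (Fin n) ℝ) (M α β φ : ℝ)
    (hφ0 : 0 ≤ φ) (hφ1 : φ < 1)
    (hα0 : 0 < α) (hα : α < 1 / 2) (hαβ : α < β) (hβ : β < 1)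
    (hf : ContDiff ℝ 2 f)
    (hD : Convex ℝ {z | f z ≤ f (x 0)})
    (hconv : ConvexOn ℝ {z | f z ≤ f (x 0)} f)
    (hbdd : BddBelow (f '' {z | f z ≤ f (x 0)}))
    (hM : ∀ z ∈ {z : EuclideanSpace ℝ (Fin n) | f z ≤ f (x 0)},
      ‖fderiv ℝ (fderiv ℝ f) z‖ ≤ M)
    (hB0 : (B 0).PosDef)
    (hg : ∀ k, gradient f (x k) ≠ 0)
    (hd : ∀ k, d k = -(Matrix.toEuclideanLin ((B k)⁻¹) (gradient f (x k))))
    (hlam : ∀ k, 0 < lam k)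
    (hx : ∀ k, x (k + 1) = x k + lam k • d k)
    (hwolfe1 : ∀ k, f (x k + lam k • d k) ≤
      f (x k) + α * lam k * ⟪gradient f (x k), d k⟫)
    (hwolfe2 : ∀ k, β * ⟪gradient f (x k), d k⟫ ≤
      ⟪gradient f (x k + lam k • d k), d k⟫)
    (hBtilpd : ∀ k, (Btil k).PosDef)
    (hupdate : ∀ k, B (k + 1) = broydenPhi (Btil k) (x (k + 1) - x k)
      (gradient f (x (k + 1)) - gradient f (x k)) φ)
    (htr : ∀ k, (Btil k).trace ≤ (B k).trace)
    (hdet : ∀ k, (B k).det ≤ (Btil k).det)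
    (hratio : ∀ k,
      ((B k *ᵥ (x (k + 1) - x k)) ⬝ᵥ (B k *ᵥ (x (k + 1) - x k))) /
          ((x (k + 1) - x k) ⬝ᵥ (B k *ᵥ (x (k + 1) - x k))) ^ 2 ≤
        ((Btil k *ᵥ (x (k + 1) - x k)) ⬝ᵥ (Btil k *ᵥ (x (k + 1) - x k))) /
          ((x (k + 1) - x k) ⬝ᵥ (Btil k *ᵥ (x (k + 1) - x k))) ^ 2) :
    Filter.liminf (fun k => ‖gradient f (x k)‖) Filter.atTop = 0 := by
  -- enlarging `M` makes it positive
  obtain ⟨M', hM'0, hM'⟩ : ∃ M' : ℝ, 0 < M' ∧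
      ∀ z ∈ {z : EuclideanSpace ℝ (Fin n) | f z ≤ f (x 0)},
        ‖fderiv ℝ (fderiv ℝ f) z‖ ≤ M' :=
    ⟨max M 1, by positivity, fun z hz => (hM z hz).trans (le_max_left _ _)⟩
  set g : ℕ → EuclideanSpace ℝ (Fin n) := fun k => gradient f (x k) with hgdef
  set s : ℕ → EuclideanSpace ℝ (Fin n) := fun k => x (k + 1) - x k with hsdef
  set y : ℕ → EuclideanSpace ℝ (Fin n) := fun k => g (k + 1) - g k with hydef
  set δ : ℕ → ℝ := fun k => -⟪g k, s k⟫ with hδdef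
  have hsd : ∀ k, s k = lam k • d k := by
    intro k; simp only [hsdef]; rw [hx k]; abel
  have hstep : ∀ k, (B k).PosDef → (s k).ofLp ≠ 0 ∧ 0 < δ k ∧ _ := fun k hk =>
    quasiNewton_step hk (hlam k) (hg k) (hd k) (hsd k)
  have hcurv : ∀ k, (1 - β) * δ k ≤ (y k).ofLp ⬝ᵥ (s k).ofLp := by
    intro k
    have h := mul_le_mul_of_nonneg_left (hwolfe2 k) (hlam k).le
    rw [← hx k] at h
    rw [← inner_eq_dotProduct]
    simp only [hδdef, hydef, hgdef, hsd k, inner_sub_left, inner_smul_right]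
    linarith
  have hposdef : ∀ k, (B k).PosDef := by
    intro k
    induction k with
    | zero => exact hB0
    | succ k ih =>
      obtain ⟨hs0, hδ0, -⟩ := hstep k ih
      rw [hupdate k]
      refine broydenPhi_posDef (hBtilpd k) hφ0 ?_ ?_
      · have h := (hBtilpd k).dotProduct_mulVec_pos hs0
        rwa [star_trivial] at h
      · exact lt_of_lt_of_le (mul_pos (by linarith) hδ0) (hcurv k)
  have hδpos : ∀ k, 0 < δ k := fun k => (hstep k (hposdef k)).2.1
  have hdecr : ∀ k, f (x (k + 1)) ≤ f (x k) - α * δ k := by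
    intro k
    have h := hwolfe1 k
    rw [← hx k] at h
    simp only [hδdef, hgdef, hsd k, inner_smul_right]
    linarith
  have hanti : StrictAnti fun k => f (x k) := strictAnti_nat_of_succ_lt fun k => by
    have := mul_pos hα0 (hδpos k)
    linarith [hdecr k]
  have hlev : ∀ k, f (x k) ≤ f (x 0) := fun k => hanti.antitone (Nat.zero_le k)
  have hδlim : Filter.Tendsto δ Filter.atTop (nhds 0) := by
    have hbd : BddBelow (Set.range fun k => f (x k)) :=
      hbdd.mono (by rintro _ ⟨k, rfl⟩; exact ⟨x k, hlev k, rfl⟩)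
    have hl := tendsto_atTop_ciInf hanti.antitone hbd
    have hl' := ((hl.sub ((Filter.tendsto_add_atTop_iff_nat 1).2 hl)).div_const α)
    rw [sub_self, zero_div] at hl'
    refine squeeze_zero (fun k => (hδpos k).le) (fun k => ?_) hl'
    rw [le_div_iff₀ hα0]
    linarith [hdecr k]
  have hcoc : ∀ k, (y k).ofLp ⬝ᵥ (y k).ofLp ≤ M' * ((y k).ofLp ⬝ᵥ (s k).ofLp) := by
    intro k
    have hxs : x k + s k = x (k + 1) := by simp [hsdef]
    have h := gradient_cocoercive hf hM'0 hconv hM' (hlev k) (s := s k)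
      (by rw [hxs]; exact hanti (Nat.succ_pos k))
    rw [hxs] at h
    rw [← inner_eq_dotProduct, ← inner_eq_dotProduct, real_inner_self_eq_norm_sq]
    exact h
  have hfreq : ∀ γ : ℝ, 0 < γ → ∃ᶠ k in Filter.atTop, ‖g k‖ ≤ γ := by
    intro γ hγ hev
    have hev' : ∀ᶠ k in Filter.atTop, γ ≤ ‖g k‖ := hev.mono fun k hk => (not_le.1 hk).le
    set η := (1 - φ) / 8 with hη
    have hη0 : 0 < η := by rw [hη]; linarith
    obtain ⟨ε, hε0, hε1, hε2⟩ : ∃ ε : ℝ, 0 < ε ∧ M' * ε ≤ η ^ 2 ∧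
        ε ≤ 4 * η * Real.exp (-M') := by
      refine ⟨min (η ^ 2 / M') (4 * η * Real.exp (-M')), by positivity, ?_, min_le_right _ _⟩
      rw [mul_comm, ← le_div_iff₀ hM'0]
      exact min_le_left _ _
    have hthr : 0 < ε * ((1 - β) * γ ^ 2) := by
      have : 0 < 1 - β := by linarith
      positivity
    obtain ⟨N, hN⟩ := Filter.eventually_atTop.1
      (hev'.and (hδlim.eventually_le_const hthr))
    set ψ : ℕ → ℝ := fun k => (B k).trace - Real.log (B k).det with hψ
    have hψstep : ∀ k, N ≤ k → ψ (k + 1) ≤ ψ k - 1 := by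
      intro k hk
      obtain ⟨hgk, hδk⟩ := hN k hk
      obtain ⟨hs0, hδ0, hrat⟩ := hstep k (hposdef k)
      simp only [hψ]
      rw [hupdate k]
      refine potential_update (hposdef k) (hBtilpd k) hM'0 hφ0 hη0 (by rw [hη]; ring) hε0 hε1 hε2
        hs0 hβ hδ0 hγ (hcurv k) (hcoc k) ?_ hδk (htr k) (hdet k)
      refine le_trans ?_ (hrat.symm.le.trans (hratio k))
      gcongr
    have hψdown : ∀ j : ℕ, ψ (N + j) ≤ ψ N - j := by
      intro j
      induction j with
      | zero => simp
      | succ j ih =>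
        have := hψstep (N + j) (Nat.le_add_right _ _)
        push_cast
        rw [← add_assoc]
        linarith
    obtain ⟨j, hj⟩ := exists_nat_gt (ψ N)
    have h1 := hψdown j
    have h2 : 0 ≤ ψ (N + j) := sub_nonneg.2 (log_det_le_trace (hposdef _))
    linarith
  have hbelow : Filter.IsBoundedUnder (· ≥ ·) Filter.atTop fun k => ‖g k‖ :=
    Filter.isBoundedUnder_of ⟨0, fun k => norm_nonneg _⟩
  apply le_antisymm
  · refine le_of_forall_pos_le_add fun γ hγ => ?_
    rw [zero_add]
    exact Filter.liminf_le_of_frequently_le (hfreq γ hγ) hbelow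
  · exact Filter.le_liminf_of_le (Filter.IsCoboundedUnder.of_frequently_le (hfreq 1 one_pos))
      (Filter.Eventually.of_forall fun k => norm_nonneg _)
end

section
/- Let A be an n×n real symmetric matrix and let s ∈ ℝⁿ be a nonzero eigenvector of A, i.e., A s = γ s for some γ ∈ ℝ. Then for any real orthogonal matrix L having s/‖s‖ among its columns, the best Frobenius-norm approximation L_A of A in the algebra L = sd L satisfies L_A s = A s. -/
/-!
The vector `s` is a scalar multiple of a column `L eⱼ`, which is therefore also an eigenvector of `A`
for `γ`. Orthogonality gives `Lᵀ A L eⱼ = γ Lᵀ L eⱼ = γ eⱼ`, so the `j`-th diagonal entry of `Lᵀ A L`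
is `γ`. Hence `L d(z) Lᵀ (L eⱼ) = L d(z) eⱼ = γ L eⱼ`, and the claim follows by scaling.
-/

open Matrix

/-- The best Frobenius-norm approximation of `A` in `sd L`:
`L d(z_A) Lᵀ` with `(z_A)_i = (Lᵀ A L)_{ii}`. -/
noncomputable def sdProjR {n : ℕ} (L A : Matrix (Fin n) (Fin n) ℝ) :
    Matrix (Fin n) (Fin n) ℝ :=
  L * Matrix.diagonal (fun i => (Lᵀ * A * L) i i) * Lᵀ

/-- if `s ≠ 0` is an eigenvector of the symmetric matrix `A` and the
orthogonal matrix `L` has `s/‖s‖` among its columns, then the best Frobenius-norm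
approximation `L_A` of `A` in `sd L` satisfies `L_A s = A s`. -/
theorem sd_proj_eigenvector {n : ℕ} (A : Matrix (Fin n) (Fin n) ℝ) (hA : A.IsSymm)
    (s : Fin n → ℝ) (hs : s ≠ 0) (γ : ℝ) (heig : A *ᵥ s = γ • s)
    (L : Matrix (Fin n) (Fin n) ℝ) (hL : L ∈ Matrix.orthogonalGroup (Fin n) ℝ)
    (hcol : ∃ j, (fun i => L i j) = (Real.sqrt (s ⬝ᵥ s))⁻¹ • s) :
    sdProjR L A *ᵥ s = A *ᵥ s := by
  obtain ⟨j, hj⟩ := hcol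
  have hc : Real.sqrt (s ⬝ᵥ s) ≠ 0 := by
    have h0 : 0 ≤ s ⬝ᵥ s := Finset.sum_nonneg fun i _ => mul_self_nonneg (s i)
    rw [Real.sqrt_ne_zero h0]
    exact fun h => hs (dotProduct_self_eq_zero.mp h)
  have hLL : Lᵀ * L = 1 := (Matrix.mem_orthogonalGroup_iff' (Fin n) ℝ).mp hL
  have hcol : L *ᵥ Pi.single j 1 = (Real.sqrt (s ⬝ᵥ s))⁻¹ • s := by
    rw [Matrix.mulVec_single_one]
    exact hj
  have hsL : s = Real.sqrt (s ⬝ᵥ s) • (L *ᵥ Pi.single j 1) := by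
    rw [hcol, smul_smul, mul_inv_cancel₀ hc, one_smul]
  have hAL : A *ᵥ (L *ᵥ Pi.single j 1) = γ • (L *ᵥ Pi.single j 1) := by
    rw [hcol, Matrix.mulVec_smul, heig, smul_comm]
  have hcolj : (Lᵀ * A * L) *ᵥ Pi.single j 1 = γ • Pi.single j 1 := by
    rw [← Matrix.mulVec_mulVec, ← Matrix.mulVec_mulVec, hAL, Matrix.mulVec_smul,
      Matrix.mulVec_mulVec, hLL, Matrix.one_mulVec]
  have hz : (Lᵀ * A * L) j j = γ := by
    have h := congrFun hcolj j
    rw [Matrix.mulVec_single_one] at h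
    simpa using h
  have hproj : sdProjR L A *ᵥ (L *ᵥ Pi.single j 1) = γ • (L *ᵥ Pi.single j 1) := by
    rw [sdProjR, ← Matrix.mulVec_mulVec, Matrix.mulVec_mulVec (M := Lᵀ), hLL, Matrix.one_mulVec,
      ← Matrix.mulVec_mulVec, Matrix.diagonal_mulVec_single, hz, ← Matrix.mulVec_smul]
    simp [← Pi.single_smul]
  generalize Real.sqrt (s ⬝ᵥ s) = c at hsL
  rw [hsL, Matrix.mulVec_smul, Matrix.mulVec_smul, hproj, hAL]
end

section
/- Let A ∈ ℝ^{n×n} be symmetric, let 1 ≤ m ≤ n be an integer, and let s ∈ ℝⁿ be such that the Krylov subspace K_m(A, s) = span{s, A s, …, A^{m−1} s} has dimension m. Then there exists an n×n real orthogonal matrix L such that, setting L = sd L and letting L_A be the best approximation in Frobenius norm of A in L, one has p(L_A) s = p(A) s for every polynomial p of degree at most m − 1. -/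
/-!
Let `K` be the Krylov subspace and `T` the compression to `K` of the operator given by `A`, that
is, `A` followed by the orthogonal projection onto `K`. As `A` is symmetric, so is `T`, hence `K`
has an orthonormal basis of eigenvectors of `T`; extend it to an orthonormal basis of `ℝⁿ` and let
`L` have these basis vectors as columns. Every column `u` of `L` is an eigenvector of `L_A` with
eigenvalue the Rayleigh quotient `uᵀ A u`, and for `u ∈ K` this is the eigenvalue of `T` at `u`.
So `L_A` agrees with `T` on `K` (`exists_sdProjR_eq_compression`). If `A ^ k s` and `A ^ (k + 1) s`
are both in `K`, then `T` maps the former to the latter, so by induction `L_A ^ k s = A ^ k s` for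
all `k ≤ m - 1`, and the claim follows by linearity in the polynomial.
-/

open Matrix

lemma sdProjR_mulVec_col {n : ℕ} {L : Matrix (Fin n) (Fin n) ℝ} (hL : Lᵀ * L = 1)
    (A : Matrix (Fin n) (Fin n) ℝ) (j : Fin n) :
    sdProjR L A *ᵥ L.col j = (L.col j ⬝ᵥ A *ᵥ L.col j) • L.col j := by
  have h : sdProjR L A * L = L * Matrix.diagonal (fun i => (Lᵀ * A * L) i i) := by
    rw [sdProjR, Matrix.mul_assoc, hL, Matrix.mul_one]
  have hd : (Lᵀ * A * L) j j = L.col j ⬝ᵥ A *ᵥ L.col j := by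
    rw [Matrix.mul_assoc]
    rfl
  ext i
  have hi := congrFun (congrFun h i) j
  rw [Matrix.mul_diagonal, hd] at hi
  rw [Pi.smul_apply, smul_eq_mul, mul_comm]
  exact hi

/-- The compression to `K` of the operator with matrix `A`: apply `A`, then project orthogonally
onto `K`. -/
noncomputable def compression {n : ℕ} (A : Matrix (Fin n) (Fin n) ℝ)
    (K : Submodule ℝ (EuclideanSpace ℝ (Fin n))) : K →ₗ[ℝ] K :=
  K.orthogonalProjectionOnto.toLinearMap ∘ₗ Matrix.toEuclideanLin A ∘ₗ K.subtype

lemma inner_compression {n : ℕ} (A : Matrix (Fin n) (Fin n) ℝ)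
    (K : Submodule ℝ (EuclideanSpace ℝ (Fin n))) (x y : K) :
    inner ℝ x (compression A K y) =
      inner ℝ (x : EuclideanSpace ℝ (Fin n)) (Matrix.toEuclideanLin A y) := by
  simp [compression]

lemma compression_isSymmetric {n : ℕ} {A : Matrix (Fin n) (Fin n) ℝ} (hA : A.IsSymm)
    (K : Submodule ℝ (EuclideanSpace ℝ (Fin n))) : (compression A K).IsSymmetric := by
  have hA' : (Matrix.toEuclideanLin A).IsSymmetric := by
    rw [Matrix.isSymmetric_toEuclideanLin_iff, Matrix.IsHermitian,
      Matrix.conjTranspose_eq_transpose_of_trivial]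
    exact hA
  intro x y
  rw [real_inner_comm, inner_compression, inner_compression, real_inner_comm]
  exact hA' x y

/-- For every subspace `K` some orthogonal `L` makes `L_A` restrict on `K` to the compression of
`A`. -/
lemma exists_sdProjR_eq_compression {n : ℕ} {A : Matrix (Fin n) (Fin n) ℝ} (hA : A.IsSymm)
    (K : Submodule ℝ (EuclideanSpace ℝ (Fin n))) :
    ∃ L ∈ Matrix.orthogonalGroup (Fin n) ℝ, ∀ x : K,
      Matrix.toEuclideanLin (sdProjR L A) x = compression A K x := by
  classical
  have hT := compression_isSymmetric hA K
  set e := hT.eigenvectorBasis rfl with he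
  have hk : Module.finrank ℝ K ≤ n := by
    simpa using K.finrank_le
  -- Only the values at indices `< finrank K` matter; the extension overwrites the others.
  let v : Fin n → EuclideanSpace ℝ (Fin n) := fun i =>
    if h : (i : ℕ) < Module.finrank ℝ K then (e ⟨i, h⟩ : EuclideanSpace ℝ (Fin n)) else 0
  have hv : Orthonormal ℝ (Set.domRestrict {i : Fin n | (i : ℕ) < Module.finrank ℝ K} v) := by
    have h1 : Orthonormal ℝ (fun i => (e i : EuclideanSpace ℝ (Fin n))) :=
      e.orthonormal.comp_linearIsometry K.subtypeₗᵢ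
    have h2 := h1.comp
      (fun i : {i : Fin n | (i : ℕ) < Module.finrank ℝ K} => (⟨i.1, i.2⟩ : Fin _)) (by
        intro i j hij
        ext
        simpa using hij)
    convert h2 using 1
    ext1 i
    exact dif_pos i.2
  obtain ⟨b, hb⟩ := hv.exists_orthonormalBasis_extension_of_card_eq (by simp)
  let L : Matrix (Fin n) (Fin n) ℝ := Matrix.of fun i j => b j i
  have hL : Lᵀ * L = 1 := by
    ext i j
    have := orthonormal_iff_ite.mp b.orthonormal i j
    rw [Matrix.one_apply, ← this]
    simp [L, Matrix.mul_apply, PiLp.inner_apply, mul_comm]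
  refine ⟨L, (Matrix.mem_orthogonalGroup_iff' _ _).mpr hL, fun x => ?_⟩
  suffices h : Matrix.toEuclideanLin (sdProjR L A) ∘ₗ K.subtype = K.subtype ∘ₗ compression A K from
    LinearMap.congr_fun h x
  refine e.toBasis.ext fun j => ?_
  have hbj : b (Fin.castLE hk j) = e j := by
    rw [hb _ (by simp)]
    exact dif_pos j.2
  have hcol : L.col (Fin.castLE hk j) = WithLp.ofLp (e j : EuclideanSpace ℝ (Fin n)) := by
    rw [← hbj]
    rfl
  have hmul := sdProjR_mulVec_col hL A (Fin.castLE hk j)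
  rw [hcol] at hmul
  have hTe : compression A K (e j) = (hT.eigenvalues rfl j) • e j :=
    hT.apply_eigenvectorBasis rfl j
  -- The Rayleigh quotient of `A` at `e j` is the eigenvalue of the compression.
  have hray : WithLp.ofLp (e j : EuclideanSpace ℝ (Fin n)) ⬝ᵥ
      A *ᵥ WithLp.ofLp (e j : EuclideanSpace ℝ (Fin n)) = hT.eigenvalues rfl j := by
    have h := inner_compression A K (e j) (e j)
    rw [hTe] at h
    replace h := (real_inner_smul_right (e j) (e j) (hT.eigenvalues rfl j)).symm.trans h
    rw [real_inner_self_eq_norm_sq, e.orthonormal.1] at h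
    rw [EuclideanSpace.inner_eq_star_dotProduct] at h
    rw [dotProduct_comm]
    simpa using h.symm
  rw [hray] at hmul
  simp only [OrthonormalBasis.coe_toBasis, LinearMap.comp_apply, Submodule.subtype_apply, hTe]
  ext i
  simpa using congrFun hmul i

/-- if the Krylov subspace `K_m(A,s)` has dimension `m`, there is an
orthogonal matrix `L` such that the best Frobenius-norm approximation `L_A` of the
symmetric matrix `A` in `sd L` satisfies `p(L_A) s = p(A) s` for all polynomials
`p` of degree at most `m − 1`. -/
theorem sd_proj_krylov {n m : ℕ} (A : Matrix (Fin n) (Fin n) ℝ) (hA : A.IsSymm)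
    (hm1 : 1 ≤ m) (hmn : m ≤ n) (s : Fin n → ℝ)
    (hdim : Module.finrank ℝ
      ↥(Submodule.span ℝ (Set.range fun i : Fin m => (A ^ (i : ℕ)) *ᵥ s)) = m) :
    ∃ L ∈ Matrix.orthogonalGroup (Fin n) ℝ,
      ∀ p : Polynomial ℝ, p.natDegree ≤ m - 1 →
        (Polynomial.aeval (sdProjR L A) p) *ᵥ s = (Polynomial.aeval A p) *ᵥ s := by
  let K : Submodule ℝ (EuclideanSpace ℝ (Fin n)) :=
    Submodule.span ℝ (Set.range fun i : Fin m => WithLp.toLp 2 ((A ^ (i : ℕ)) *ᵥ s))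
  obtain ⟨L, hL, hLK⟩ := exists_sdProjR_eq_compression hA K
  refine ⟨L, hL, fun p hp => ?_⟩
  have hmem : ∀ k < m, WithLp.toLp 2 ((A ^ k) *ᵥ s) ∈ K := fun k hk =>
    Submodule.subset_span ⟨⟨k, hk⟩, rfl⟩
  have hpow : ∀ k < m, (sdProjR L A ^ k) *ᵥ s = (A ^ k) *ᵥ s := by
    intro k
    induction k with
    | zero => simp
    | succ k ih =>
      intro hk
      have hA1 : Matrix.toEuclideanLin A (WithLp.toLp 2 ((A ^ k) *ᵥ s)) =
          WithLp.toLp 2 ((A ^ (k + 1)) *ᵥ s) := by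
        simp [pow_succ']
      -- Projecting `A ^ (k + 1) s` onto `K` changes nothing, as it already lies in `K`.
      have h := hLK ⟨_, hmem k (by lia)⟩
      simp only [compression, LinearMap.comp_apply, Submodule.subtype_apply, hA1] at h
      rw [pow_succ', ← Matrix.mulVec_mulVec, ih (by lia)]
      have h2 := h.trans (Submodule.starProjection_eq_self_iff.mpr (hmem (k + 1) hk))
      simpa using congrArg WithLp.ofLp h2
  rw [Polynomial.aeval_eq_sum_range, Polynomial.aeval_eq_sum_range, Matrix.sum_mulVec,
    Matrix.sum_mulVec]
  refine Finset.sum_congr rfl fun k hk => ?_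
  rw [Matrix.smul_mulVec, Matrix.smul_mulVec, hpow k (by rw [Finset.mem_range] at hk; lia)]
end

section
/- Let A be an n×n real symmetric positive definite matrix, b ∈ ℝⁿ, and f(x) = ½ xᵀ A x − xᵀ b. Consider the BFGS-type iteration with exact line search: H₀ symmetric positive definite, g₀ = A x₀ − b, d₀ = −H₀ g₀; for each k with g_k ≠ 0: λ_k = argmin_λ f(x_k + λ d_k), x_{k+1} = x_k + λ_k d_k, s_k = x_{k+1} − x_k, g_{k+1} = A x_{k+1} − b, y_k = g_{k+1} − g_k, ρ_k = 1/(s_kᵀ y_k), and H_{k+1} = (I − ρ_k s_k y_kᵀ) H̃_k (I − ρ_k y_k s_kᵀ) + ρ_k s_k s_kᵀ, d_{k+1} = −H_{k+1} g_{k+1}, where the H̃_k are symmetric positive definite matrices satisfying H̃_k g_{k+1} = β_k H₀ g_{k+1} for some β_k ≠ 0. Then for every k (as long as the gradients are nonzero): (i) g_{k+1}ᵀ s_j = 0 for all j = 0, …, k; (ii) s_{k+1}ᵀ A s_j = 0 for all j = 0, …, k; (iii) span{s₀, …, s_{k+1}} = span{H₀ g₀, …, H₀ g_{k+1}}. -/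
/-!
Exact line search makes `g (k+1)` orthogonal to `s k`. Hence, in the update of `H`, the right-hand
factor fixes `g (k+1)` and the final rank-one term kills it, and the hypothesis on `Htil k` collapses the new direction to the
conjugate-gradient-like recurrence `d (k+1) = c • s k - β • H₀ g (k+1)` with `β ≠ 0`, where `c` is
the coefficient that makes `d (k+1)` conjugate to `s k` (`bfgs_direction`). In particular
`d (k+1) ⬝ᵥ g (k+1) ≠ 0` while the gradient is nonzero, so the step length and `s (k+1)` do not
vanish.

The three claims then follow by simultaneous induction. Orthogonality of `g (k+1)` to the older
steps comes from `g (k+1) = g k + A s k` and conjugacy. Conjugacy of `s (k+1)` to an older `s j`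
comes from `A s j = g (j+1) - g j`, the symmetry of `H₀`, and the fact that `H₀ g i` lies in the
span of `s 0, …, s k`, to which `g (k+1)` is orthogonal. The spans grow together because the
recurrence exchanges `s (k+1)` for `H₀ g (k+1)` modulo `s k`.
-/

open Matrix

/-- The quadratic objective `f(v) = ½ vᵀ A v − vᵀ b`. -/
noncomputable def fQuad {n : ℕ} (A : Matrix (Fin n) (Fin n) ℝ) (b : Fin n → ℝ)
    (v : Fin n → ℝ) : ℝ :=
  (1 / 2) * (v ⬝ᵥ (A *ᵥ v)) - v ⬝ᵥ b

lemma symm_dot {n : ℕ} {M : Matrix (Fin n) (Fin n) ℝ} (hM : M.PosDef) (u v : Fin n → ℝ) :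
    u ⬝ᵥ (M *ᵥ v) = v ⬝ᵥ (M *ᵥ u) := by
  have h : Mᵀ = M := by simpa using hM.isHermitian.eq
  rw [dotProduct_mulVec, ← mulVec_transpose, h, dotProduct_comm]

lemma posDef_dot_pos {n : ℕ} {M : Matrix (Fin n) (Fin n) ℝ} (hM : M.PosDef) {v : Fin n → ℝ}
    (hv : v ≠ 0) : 0 < v ⬝ᵥ (M *ᵥ v) := by
  simpa using hM.dotProduct_mulVec_pos hv

/-- First-order optimality of an exact minimizer along the line `u + t • d`. -/
lemma line_search_orthogonal {n : ℕ} {A : Matrix (Fin n) (Fin n) ℝ} (hA : A.PosDef)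
    (b u d : Fin n → ℝ) (l : ℝ)
    (h : ∀ t : ℝ, fQuad A b (u + l • d) ≤ fQuad A b (u + t • d)) :
    (A *ᵥ (u + l • d) - b) ⬝ᵥ d = 0 := by
  set p := (A *ᵥ (u + l • d) - b) ⬝ᵥ d with hp
  set q := d ⬝ᵥ (A *ᵥ d) with hq
  have hq0 : 0 ≤ q := by simpa using hA.posSemidef.dotProduct_mulVec_nonneg d
  have key : ∀ t : ℝ, 0 ≤ t * p + t ^ 2 / 2 * q := by
    intro t
    have h1 := h (l + t)
    have e : u + (l + t) • d = (u + l • d) + t • d := by rw [add_smul, add_assoc]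
    rw [e] at h1
    have hsym := symm_dot hA d (u + l • d)
    have hc := dotProduct_comm (A *ᵥ (u + l • d)) d
    have hb := dotProduct_comm b d
    generalize u + l • d = w at *
    simp only [fQuad, mulVec_add, mulVec_smul, dotProduct_add, add_dotProduct, smul_dotProduct,
      dotProduct_smul, smul_eq_mul, ← hq] at h1
    have hp' : p = d ⬝ᵥ (A *ᵥ w) - d ⬝ᵥ b := by rw [hp, sub_dotProduct, hc, hb]
    rw [← hsym] at h1
    rw [hp']
    linarith
  -- The shifted denominator `q + 1` also covers the degenerate case `d = 0`.
  have h2 := key (-p / (q + 1))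
  have hq1 : 0 < q + 1 := by linarith
  have e : -p / (q + 1) * p + (-p / (q + 1)) ^ 2 / 2 * q
      = -(p ^ 2 * ((q + 2) / (2 * (q + 1) ^ 2))) := by
    field_simp
    ring
  rw [e] at h2
  have hr : 0 < (q + 2) / (2 * (q + 1) ^ 2) := by positivity
  have h3 : p ^ 2 ≤ 0 := by
    by_contra hcon
    push Not at hcon
    have := mul_pos hcon hr
    linarith
  exact pow_eq_zero_iff (two_ne_zero) |>.mp (le_antisymm h3 (sq_nonneg p))

/-- The BFGS-type update applied to a vector `γ` orthogonal to the last step `s`. -/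
lemma bfgs_direction {n : ℕ} (M H₀ : Matrix (Fin n) (Fin n) ℝ) (s y γ : Fin n → ℝ) (r β : ℝ)
    (hγ : γ ⬝ᵥ s = 0) (hM : M *ᵥ γ = β • (H₀ *ᵥ γ)) :
    ((1 - r • vecMulVec s y) * M * (1 - r • vecMulVec y s) + r • vecMulVec s s) *ᵥ γ
      = β • (H₀ *ᵥ γ) - (β * r * (y ⬝ᵥ (H₀ *ᵥ γ))) • s := by
  have h' : s ⬝ᵥ γ = 0 := by rw [dotProduct_comm, hγ]
  rw [add_mulVec, ← mulVec_mulVec, ← mulVec_mulVec]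
  have h1 : (1 - r • vecMulVec y s) *ᵥ γ = γ := by
    simp [sub_mulVec, smul_mulVec, vecMulVec_mulVec, h']
  have h2 : (r • vecMulVec s s) *ᵥ γ = 0 := by
    simp [smul_mulVec, vecMulVec_mulVec, h']
  rw [h1, h2, hM, add_zero, sub_mulVec, one_mulVec, smul_mulVec, vecMulVec_mulVec]
  ext i
  simp
  ring

lemma mem_span_le {V : Type*} [AddCommGroup V] [Module ℝ V] (u : ℕ → V) {i k : ℕ} (h : i ≤ k) :
    u i ∈ Submodule.span ℝ {v : V | ∃ j ≤ k, v = u j} :=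
  Submodule.subset_span ⟨i, h, rfl⟩

lemma span_le_succ {V : Type*} [AddCommGroup V] [Module ℝ V] (u : ℕ → V) (k : ℕ) :
    Submodule.span ℝ {v : V | ∃ j ≤ k, v = u j}
      ≤ Submodule.span ℝ {v : V | ∃ j ≤ k + 1, v = u j} :=
  Submodule.span_mono fun _ ⟨j, hj, e⟩ => ⟨j, by omega, e⟩

lemma span_step {V : Type*} [AddCommGroup V] [Module ℝ V] (u w : ℕ → V) (k : ℕ)
    (hk : Submodule.span ℝ {v : V | ∃ j ≤ k, v = u j}
      = Submodule.span ℝ {v : V | ∃ j ≤ k, v = w j})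
    (a : ℝ) (ha : a ≠ 0) (z : V) (hz : z ∈ Submodule.span ℝ {v : V | ∃ j ≤ k, v = u j})
    (h : u (k + 1) = a • w (k + 1) + z) :
    Submodule.span ℝ {v : V | ∃ j ≤ k + 1, v = u j}
      = Submodule.span ℝ {v : V | ∃ j ≤ k + 1, v = w j} := by
  apply le_antisymm
  · rw [Submodule.span_le]
    rintro _ ⟨j, hj, rfl⟩
    rcases Nat.lt_or_ge k j with hlt | hle
    · obtain rfl : j = k + 1 := by omega
      rw [h]
      exact Submodule.add_mem _ (Submodule.smul_mem _ _ (mem_span_le w le_rfl))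
        (span_le_succ w k (hk ▸ hz))
    · exact span_le_succ w k (hk ▸ mem_span_le u hle)
  · rw [Submodule.span_le]
    rintro _ ⟨j, hj, rfl⟩
    rcases Nat.lt_or_ge k j with hlt | hle
    · obtain rfl : j = k + 1 := by omega
      have e : w (k + 1) = a⁻¹ • (u (k + 1) - z) := by
        rw [h, add_sub_cancel_right, smul_smul, inv_mul_cancel₀ ha, one_smul]
      rw [e]
      exact Submodule.smul_mem _ _ (Submodule.sub_mem _ (mem_span_le u le_rfl)
        (span_le_succ u k hz))
    · exact span_le_succ u k (hk.symm ▸ mem_span_le w hle)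

/-- for the BFGS-type iteration with exact line search on a strictly
convex quadratic, if `H̃_k g_{k+1} = β_k H₀ g_{k+1}` with `β_k ≠ 0`, then (as long
as the gradients are nonzero): the gradients are orthogonal to all previous steps,
the steps are `A`-conjugate, and `span{s₀,…,s_{k+1}} = span{H₀g₀,…,H₀g_{k+1}}`. -/
theorem bfgs_type_quadratic_properties {n : ℕ}
    (A : Matrix (Fin n) (Fin n) ℝ) (hA : A.PosDef) (b : Fin n → ℝ)
    (x g d s y : ℕ → Fin n → ℝ) (lam rho : ℕ → ℝ)
    (H Htil : ℕ → Matrix (Fin n) (Fin n) ℝ)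
    (hg : ∀ k, g k = A *ᵥ x k - b)
    (hH0 : (H 0).PosDef)
    (hHtil : ∀ k, (Htil k).PosDef)
    (hd : ∀ k, d k = -(H k *ᵥ g k))
    (hlam : ∀ k, ∀ t : ℝ, fQuad A b (x k + lam k • d k) ≤ fQuad A b (x k + t • d k))
    (hx : ∀ k, x (k + 1) = x k + lam k • d k)
    (hs : ∀ k, s k = x (k + 1) - x k)
    (hy : ∀ k, y k = g (k + 1) - g k)
    (hrho : ∀ k, rho k = (s k ⬝ᵥ y k)⁻¹)
    (hH : ∀ k, H (k + 1) =
      (1 - rho k • Matrix.vecMulVec (s k) (y k)) * Htil k *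
          (1 - rho k • Matrix.vecMulVec (y k) (s k))
        + rho k • Matrix.vecMulVec (s k) (s k))
    (hbeta : ∀ k, ∃ βk : ℝ, βk ≠ 0 ∧
      Htil k *ᵥ g (k + 1) = βk • (H 0 *ᵥ g (k + 1))) :
    ∀ k : ℕ, (∀ j ≤ k + 1, g j ≠ 0) →
      (∀ j ≤ k, g (k + 1) ⬝ᵥ s j = 0) ∧
      (∀ j ≤ k, s (k + 1) ⬝ᵥ (A *ᵥ s j) = 0) ∧
      Submodule.span ℝ {v : Fin n → ℝ | ∃ j ≤ k + 1, v = s j} =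
        Submodule.span ℝ {v : Fin n → ℝ | ∃ j ≤ k + 1, v = H 0 *ᵥ g j} := by
  have hsd : ∀ k, s k = lam k • d k := fun k => by rw [hs, hx, add_sub_cancel_left]
  have hyA : ∀ k, y k = A *ᵥ s k := fun k => by
    rw [hy, hg, hg, hs, mulVec_sub]; abel
  have hgd : ∀ k, g (k + 1) ⬝ᵥ d k = 0 := fun k => by
    rw [hg, hx]
    exact line_search_orthogonal hA b (x k) (d k) (lam k) (hlam k)
  have hgs : ∀ k, g (k + 1) ⬝ᵥ s k = 0 := fun k => by
    rw [hsd, dotProduct_smul, hgd, smul_zero]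
  have hdir : ∀ k, ∃ β : ℝ, β ≠ 0 ∧ d (k + 1) = -(β • (H 0 *ᵥ g (k + 1)))
      + (β * rho k * (y k ⬝ᵥ (H 0 *ᵥ g (k + 1)))) • s k := by
    intro k
    obtain ⟨β, hβ, hM⟩ := hbeta k
    refine ⟨β, hβ, ?_⟩
    rw [hd, hH, bfgs_direction _ (H 0) _ _ _ _ β (hgs k) hM]
    abel
  have hdg : ∀ k, g k ≠ 0 → g k ⬝ᵥ d k ≠ 0 := by
    intro k hk
    have hpos := posDef_dot_pos hH0 hk
    cases k with
    | zero =>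
      rw [hd, dotProduct_neg]
      exact neg_ne_zero.mpr hpos.ne'
    | succ k =>
      obtain ⟨β, hβ, e⟩ := hdir k
      rw [e, dotProduct_add, dotProduct_neg, dotProduct_smul, dotProduct_smul, hgs, smul_zero,
        add_zero, smul_eq_mul]
      exact neg_ne_zero.mpr (mul_ne_zero hβ hpos.ne')
  have hlam0 : ∀ k, g k ≠ 0 → lam k ≠ 0 := by
    intro k hk h0
    have e : g (k + 1) = g k := by rw [hg, hg, hx, h0, zero_smul, add_zero]
    exact hdg k hk (e ▸ hgd k)
  have hsy : ∀ k, g k ≠ 0 → s k ⬝ᵥ y k ≠ 0 := by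
    intro k hk
    have hd0 : d k ≠ 0 := fun h0 => hdg k hk (by rw [h0, dotProduct_zero])
    have hs0 : s k ≠ 0 := by rw [hsd]; exact smul_ne_zero (hlam0 k hk) hd0
    rw [hyA]
    exact (posDef_dot_pos hA hs0).ne'
  have main : ∀ k : ℕ, (∀ j ≤ k, g j ≠ 0) →
      (∀ j < k, g k ⬝ᵥ s j = 0) ∧ (∀ j < k, s k ⬝ᵥ (A *ᵥ s j) = 0) ∧
      Submodule.span ℝ {v : Fin n → ℝ | ∃ j ≤ k, v = s j} =
        Submodule.span ℝ {v : Fin n → ℝ | ∃ j ≤ k, v = H 0 *ᵥ g j} := by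
    intro k
    induction k with
    | zero =>
      intro h0
      refine ⟨by simp, by simp, ?_⟩
      have e : s 0 = (-lam 0) • (H 0 *ᵥ g 0) := by rw [hsd, hd, smul_neg, neg_smul]
      have hl : IsUnit (-lam 0) := (neg_ne_zero.mpr (hlam0 0 (h0 0 le_rfl))).isUnit
      simp only [Nat.le_zero, exists_eq_left, Set.ofPred_eq_eq_singleton]
      rw [e, Submodule.span_singleton_smul_eq hl]
    | succ k ih =>
      intro hne
      obtain ⟨iha, ihb, ihc⟩ := ih fun j hj => hne j (by omega)
      obtain ⟨β, hβ, e⟩ := hdir k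
      have ha : ∀ j < k + 1, g (k + 1) ⬝ᵥ s j = 0 := by
        intro j hj
        rcases Nat.lt_or_ge j k with hlt | hge
        · have e1 : g (k + 1) = g k + A *ᵥ s k := by rw [← hyA, hy]; abel
          rw [e1, add_dotProduct, iha j hlt, zero_add, dotProduct_comm, symm_dot hA]
          exact ihb j hlt
        · obtain rfl : j = k := by omega
          exact hgs j
      have hspan : ∀ v ∈ Submodule.span ℝ {v : Fin n → ℝ | ∃ j ≤ k, v = s j},
          g (k + 1) ⬝ᵥ v = 0 := by
        intro v hv
        induction hv using Submodule.span_induction with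
        | mem v hv =>
          obtain ⟨j, hj, rfl⟩ := hv
          exact ha j (by omega)
        | zero => exact dotProduct_zero _
        | add u v _ _ hu hv => rw [dotProduct_add, hu, hv, add_zero]
        | smul a v _ hv => rw [dotProduct_smul, hv, smul_zero]
      have hgHg : ∀ i ≤ k, g (k + 1) ⬝ᵥ (H 0 *ᵥ g i) = 0 := fun i hi =>
        hspan _ (ihc ▸ mem_span_le (fun i => H 0 *ᵥ g i) hi)
      refine ⟨ha, ?_, ?_⟩
      · intro j hj
        rw [hsd (k + 1), smul_dotProduct]
        suffices h : d (k + 1) ⬝ᵥ (A *ᵥ s j) = 0 by rw [h, smul_zero]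
        rw [e, add_dotProduct, neg_dotProduct, smul_dotProduct, smul_dotProduct]
        rcases Nat.lt_or_ge j k with hlt | hge
        · have h1 : (H 0 *ᵥ g (k + 1)) ⬝ᵥ (A *ᵥ s j) = 0 := by
            rw [← hyA, hy, dotProduct_comm, sub_dotProduct, symm_dot hH0, symm_dot hH0 (g j),
              hgHg _ (by omega), hgHg _ (by omega), sub_zero]
          rw [h1, ihb j hlt, smul_zero, smul_zero, neg_zero, zero_add]
        · obtain rfl : j = k := by omega
          have h0 := hsy j (hne j (by omega))
          rw [← hyA, hrho, dotProduct_comm (H 0 *ᵥ g (j + 1)), smul_eq_mul, smul_eq_mul]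
          field_simp
          ring
      · refine span_step s (fun i => H 0 *ᵥ g i) k ihc (-(lam (k + 1) * β))
          (neg_ne_zero.mpr (mul_ne_zero (hlam0 _ (hne _ le_rfl)) hβ))
          (lam (k + 1) • (β * rho k * (y k ⬝ᵥ (H 0 *ᵥ g (k + 1)))) • s k)
          (Submodule.smul_mem _ _ (Submodule.smul_mem _ _ (mem_span_le s le_rfl))) ?_
        rw [hsd (k + 1), e, smul_add, smul_neg, smul_smul, neg_smul]
  intro k hk
  obtain ⟨h1, h2, h3⟩ := main (k + 1) hk
  exact ⟨fun j hj => h1 j (by omega), fun j hj => h2 j (by omega), h3⟩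
end

section
/- Let n ≥ s ≥ 1 and let W = [w₁|…|w_s] ∈ ℝ^{n×s} and V = [v₁|…|v_s] ∈ ℝ^{n×s} be of full rank s with WᵀW = VᵀV. Then there exist vectors h₁, …, h_s ∈ ℝⁿ such that the orthogonal matrix U = H(h_s)⋯H(h₁), a product of s Householder matrices (with H(0) interpreted as the identity), satisfies U w_i = v_i for all i ∈ {1, …, s}. -/
/-!
Columns are matched one at a time. Suppose an orthogonal `U` already sends `wᵢ` to `vᵢ` for
`i < k`, and put `h = U w_k - v_k`. Since `U w_k` and `v_k` have equal length, the reflection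
`H(h)` sends `U w_k` to `v_k` (`householder_mulVec_sub`). Equality of the Gram matrices gives
`⟨h, vᵢ⟩ = ⟨U w_k, U wᵢ⟩ - ⟨v_k, vᵢ⟩ = 0` for `i < k`, so `H(h)` fixes the columns already in
place, and `H(h) U` handles one more column. This is the induction in
`exists_householder_prod`; the degenerate case `h = 0` is covered by `H(0) = I`.
-/

open Matrix

/-- The Householder matrix `H(p) = I − (2/‖p‖²) p pᵀ`.
(For `p = 0` the junk value `2/0 = 0` makes `H(0)` the identity matrix,
matching the convention of the statement.) -/
noncomputable def householder {n : ℕ} (p : Fin n → ℝ) : Matrix (Fin n) (Fin n) ℝ :=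
  1 - (2 / (p ⬝ᵥ p)) • Matrix.vecMulVec p p

lemma householder_mulVec {n : ℕ} (p x : Fin n → ℝ) :
    householder p *ᵥ x = x - (2 / (p ⬝ᵥ p) * (p ⬝ᵥ x)) • p := by
  ext i
  simp [householder, sub_mulVec, smul_mulVec, vecMulVec_mulVec]
  ring

lemma householder_mulVec_of_dotProduct_eq_zero {n : ℕ} {p x : Fin n → ℝ} (h : p ⬝ᵥ x = 0) :
    householder p *ᵥ x = x := by
  simp [householder_mulVec, h]

lemma householder_mulVec_sub {n : ℕ} {x y : Fin n → ℝ} (h : x ⬝ᵥ x = y ⬝ᵥ y) :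
    householder (x - y) *ᵥ x = y := by
  rw [householder_mulVec]
  by_cases h0 : (x - y) ⬝ᵥ (x - y) = 0
  · have hxy : x - y = 0 := dotProduct_self_eq_zero.mp h0
    simp [sub_eq_zero.mp hxy]
    -- equal lengths give `‖x - y‖² = 2 ⟨x - y, x⟩`, so the coefficient of `x - y` is `1`
  · have h2 : (x - y) ⬝ᵥ (x - y) = 2 * ((x - y) ⬝ᵥ x) := by
      simp only [sub_dotProduct, dotProduct_sub, dotProduct_comm y x]
      linarith
    have h1 : 2 / ((x - y) ⬝ᵥ (x - y)) * ((x - y) ⬝ᵥ x) = 1 := by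
      rw [div_mul_eq_mul_div, ← h2, div_self h0]
    rw [h1, one_smul, sub_sub_cancel]

lemma householder_mem_orthogonalGroup {n : ℕ} (p : Fin n → ℝ) :
    householder p ∈ Matrix.orthogonalGroup (Fin n) ℝ := by
  rw [Matrix.mem_orthogonalGroup_iff]
  have hsymm : (householder p)ᵀ = householder p := by
    simp [householder, transpose_vecMulVec]
  rw [hsymm]
  refine Matrix.ext_of_mulVec_single fun i => ?_
  rw [← mulVec_mulVec, one_mulVec]
  generalize (Pi.single i 1 : Fin n → ℝ) = x
  by_cases h0 : p ⬝ᵥ p = 0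
  · simp [householder_mulVec, h0]
  · have hc : p ⬝ᵥ (x - (2 / (p ⬝ᵥ p) * (p ⬝ᵥ x)) • p) = -(p ⬝ᵥ x) := by
      rw [dotProduct_sub, dotProduct_smul, smul_eq_mul]
      field_simp
      ring
    rw [householder_mulVec p x, householder_mulVec, hc, mul_neg, neg_smul, sub_neg_eq_add,
      sub_add_cancel]

lemma dotProduct_mulVec_of_mem_orthogonalGroup {n : ℕ} {U : Matrix (Fin n) (Fin n) ℝ}
    (hU : U ∈ Matrix.orthogonalGroup (Fin n) ℝ) (x y : Fin n → ℝ) :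
    (U *ᵥ x) ⬝ᵥ (U *ᵥ y) = x ⬝ᵥ y := by
  have h : Uᵀ * U = 1 := (Matrix.mem_orthogonalGroup_iff' (Fin n) ℝ).mp hU
  rw [dotProduct_mulVec, vecMul_mulVec, ← dotProduct_mulVec, h, one_mulVec]

/-- Two families of vectors with the same Gram matrix are related by a product of as many
Householder matrices as there are vectors. The induction peels off the last vector, whose
reflection is the leftmost factor of the product. -/
lemma exists_householder_prod {n : ℕ} (s : ℕ) (w v : Fin s → Fin n → ℝ)
    (hwv : ∀ i j, w i ⬝ᵥ w j = v i ⬝ᵥ v j) :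
    ∃ h : Fin s → (Fin n → ℝ),
      (List.ofFn fun j => householder (h j)).reverse.prod ∈
        Matrix.orthogonalGroup (Fin n) ℝ ∧
      ∀ i : Fin s,
        (List.ofFn fun j => householder (h j)).reverse.prod *ᵥ w i = v i := by
  induction s with
  | zero => exact ⟨Fin.elim0, by simp [one_mem], fun i => i.elim0⟩
  | succ k ih =>
    obtain ⟨h, hU, hmap⟩ := ih (fun i => w i.castSucc) (fun i => v i.castSucc)
      fun i j => hwv i.castSucc j.castSucc
    set U := (List.ofFn fun j => householder (h j)).reverse.prod with hUdef
    set p := U *ᵥ w (Fin.last k) - v (Fin.last k) with hp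
    refine ⟨Fin.snoc h p, ?_⟩
    have hprod : (List.ofFn fun j => householder
        ((Fin.snoc h p : Fin (k + 1) → Fin n → ℝ) j)).reverse.prod = householder p * U := by
      rw [List.ofFn_succ']
      simp [hUdef]
    rw [hprod]
    refine ⟨mul_mem (householder_mem_orthogonalGroup p) hU, fun i => ?_⟩
    rw [← mulVec_mulVec]
    refine Fin.lastCases ?_ (fun i => ?_) i
    · apply householder_mulVec_sub
      rw [dotProduct_mulVec_of_mem_orthogonalGroup hU, hwv]
    · rw [hmap i]
      apply householder_mulVec_of_dotProduct_eq_zero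
      rw [hp, sub_dotProduct, ← hwv, ← hmap i,
        dotProduct_mulVec_of_mem_orthogonalGroup hU, sub_self]

/-- if `W, V ∈ ℝ^{n×s}` have full rank `s` and `Wᵀ W = Vᵀ V`, there
exist `h₁, …, h_s ∈ ℝⁿ` such that the orthogonal matrix
`U = H(h_s) ⋯ H(h₁)`, a product of `s` Householder matrices, maps each column
`w_i` of `W` to the corresponding column `v_i` of `V`. -/
theorem householder_mapping_columns {n s : ℕ} (hs1 : 1 ≤ s) (hsn : s ≤ n)
    (W V : Matrix (Fin n) (Fin s) ℝ) (hW : W.rank = s) (hV : V.rank = s)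
    (hWV : Wᵀ * W = Vᵀ * V) :
    ∃ h : Fin s → (Fin n → ℝ),
      (List.ofFn fun j => householder (h j)).reverse.prod ∈
        Matrix.orthogonalGroup (Fin n) ℝ ∧
      ∀ i : Fin s,
        (List.ofFn fun j => householder (h j)).reverse.prod *ᵥ (fun r => W r i) =
          fun r => V r i := by
  refine exists_householder_prod s (fun i r => W r i) (fun i r => V r i) fun i j => ?_
  -- the `(i, j)` entry of `Wᵀ W` is the inner product of columns `i` and `j`
  exact congrFun (congrFun hWV i) j
end
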